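/- arXiv:1710.09316 — 2 statements merged into one kernel-verified Lean document; each statement's English description precedes it below -/
import Mathlib

section
/- Let A be a finite subset of a finite-dimensional vector space V over ℚ (or ℝ) with affine rank m (i.e., A is contained in an affine subspace of dimension m but no smaller). Then |A+A| ≥ (m+1)|A| − m(m+1)/2. -/
open scoped Pointwise

/-- Elements of `A` whose sum with `a` is not a sum of two elements of `A` other than `a`. -/
lemma freiman_aux_card {V : Type*} [AddCommGroup V] [DecidableEq V] (A : Finset V) (a : V)
    (ha : a ∈ A) (B : Finset V) (hBA : B ⊆ A)
    (hB : ∀ b ∈ B, a + b ∉ A.erase a + A.erase a) :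
    (A.erase a + A.erase a).card + B.card ≤ (A + A).card := by
  have h1 : B.card = (B.image (fun b => a + b)).card :=
    (Finset.card_image_of_injective _ (add_right_injective a)).symm
  rw [h1, ← Finset.card_union_of_disjoint]
  · apply Finset.card_le_card
    apply Finset.union_subset
    · exact Finset.add_subset_add (Finset.erase_subset _ _) (Finset.erase_subset _ _)
    · intro x hx
      obtain ⟨b, hb, rfl⟩ := Finset.mem_image.1 hx
      exact Finset.add_mem_add ha (hBA hb)
  · rw [Finset.disjoint_right]
    intro x hx
    obtain ⟨b, hb, rfl⟩ := Finset.mem_image.1 hx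
    exact hB b hb

lemma freiman_aux_dim {V W : Type*} [AddCommGroup V] [Module ℚ V] [FiniteDimensional ℚ V]
    [DecidableEq V] [AddCommGroup W] [LinearOrder W] [IsOrderedAddMonoid W]
    (φ : V → W) (hadd : ∀ x y, φ (x + y) = φ x + φ y) (hinj : Function.Injective φ)
    (A : Finset V) (a : V) (ha : a ∈ A) (hmax : ∀ x ∈ A, φ x ≤ φ a) :
    Module.finrank ℚ (vectorSpan ℚ (A : Set V)) + 1 ≤
      (A.filter (fun b => a + b ∉ A.erase a + A.erase a)).card := by
  set B := A.filter (fun b => a + b ∉ A.erase a + A.erase a) with hB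
  have hlt : ∀ x ∈ A.erase a, φ x < φ a := fun x hx =>
    lt_of_le_of_ne (hmax x (Finset.mem_of_mem_erase hx))
      (fun h => Finset.ne_of_mem_erase hx (hinj h))
  have haB : a ∈ B := by
    rw [hB, Finset.mem_filter]
    refine ⟨ha, fun h => ?_⟩
    obtain ⟨x, hx, y, hy, hxy⟩ := Finset.mem_add.1 h
    have := add_lt_add (hlt x hx) (hlt y hy)
    rw [← hadd, ← hadd, hxy] at this
    exact lt_irrefl _ this
  set T := (B.erase a).image (fun b => b - a) with hT
  have key : ∀ c ∈ A, c - a ∈ Submodule.span ℚ (T : Set V) := by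
    by_contra! hcon
    classical
    obtain ⟨c0, hc0, hc0'⟩ := hcon
    obtain ⟨c, hc, hcmax⟩ := Finset.exists_max_image
      (A.filter (fun c => c - a ∉ Submodule.span ℚ (T : Set V))) φ
      ⟨c0, Finset.mem_filter.2 ⟨hc0, hc0'⟩⟩
    obtain ⟨hcA, hcS⟩ := Finset.mem_filter.1 hc
    have hgood : ∀ x ∈ A, φ c < φ x → x - a ∈ Submodule.span ℚ (T : Set V) := by
      intro x hx hcx
      by_contra h
      exact absurd (hcmax x (Finset.mem_filter.2 ⟨hx, h⟩)) (not_le.2 hcx)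
    have hca : c ≠ a := by
      rintro rfl
      exact hcS (by simp)
    have hcB : c ∉ B := fun h => hcS <| Submodule.subset_span <| by
      rw [hT]
      exact Finset.mem_coe.2 (Finset.mem_image_of_mem _ (Finset.mem_erase.2 ⟨hca, h⟩))
    have hsum : a + c ∈ A.erase a + A.erase a := by
      by_contra h
      exact hcB (Finset.mem_filter.2 ⟨hcA, h⟩)
    obtain ⟨x, hx, y, hy, hxy⟩ := Finset.mem_add.1 hsum
    have he : φ x + φ y = φ a + φ c := by rw [← hadd, ← hadd, hxy]
    have hcy : φ c < φ y := by
      by_contra h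
      exact absurd he (add_lt_add_of_lt_of_le (hlt x hx) (not_lt.1 h)).ne
    have hcx : φ c < φ x := by
      by_contra h
      rw [add_comm (φ x)] at he
      exact absurd he (add_lt_add_of_lt_of_le (hlt y hy) (not_lt.1 h)).ne
    apply hcS
    have : c - a = (x - a) + (y - a) := by
      have : c = x + y - a := by rw [hxy]; abel
      rw [this]; abel
    rw [this]
    exact Submodule.add_mem _ (hgood x (Finset.mem_of_mem_erase hx) hcx)
      (hgood y (Finset.mem_of_mem_erase hy) hcy)
  have hle : vectorSpan ℚ (A : Set V) ≤ Submodule.span ℚ (T : Set V) := by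
    rw [vectorSpan_eq_span_vsub_set_right ℚ (Finset.mem_coe.2 ha), Submodule.span_le]
    rintro _ ⟨c, hc, rfl⟩
    exact key c hc
  have h1 := Submodule.finrank_mono hle
  have h2 : Module.finrank ℚ (Submodule.span ℚ (T : Set V)) ≤ T.card :=
    finrank_span_finset_le_card T
  have h3 : T.card ≤ (B.erase a).card := Finset.card_image_le
  have h4 := Finset.card_erase_add_one haB
  omega

lemma freiman_aux {V W : Type*} [AddCommGroup V] [Module ℚ V] [FiniteDimensional ℚ V]
    [DecidableEq V] [AddCommGroup W] [LinearOrder W] [IsOrderedAddMonoid W]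
    (φ : V → W) (hadd : ∀ x y, φ (x + y) = φ x + φ y) (hinj : Function.Injective φ)
    (n : ℕ) : ∀ A : Finset V, A.card = n → ∀ m : ℕ,
      Module.finrank ℚ (vectorSpan ℚ (A : Set V)) = m →
      2 * (m + 1) * n ≤ 2 * (A + A).card + m * (m + 1) := by
  induction n with
  | zero => intro A _ m _; simp
  | succ n ih =>
    intro A hA m hm
    have hne : A.Nonempty := Finset.card_pos.1 (by omega)
    obtain ⟨a, ha, hmax⟩ := Finset.exists_max_image A φ hne
    have hA' : (A.erase a).card = n := by rw [Finset.card_erase_of_mem ha]; omega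
    have hins : (A : Set V) = insert a ((A.erase a : Finset V) : Set V) := by
      rw [← Finset.coe_insert, Finset.insert_erase ha]
    obtain ⟨m', hm'⟩ : ∃ m', Module.finrank ℚ
      (vectorSpan ℚ ((A.erase a : Finset V) : Set V)) = m' := ⟨_, rfl⟩
    have hih := ih (A.erase a) hA' m' hm'
    by_cases hmm : m' = m
    · subst hmm
      have h1 := freiman_aux_dim φ hadd hinj A a ha hmax
      have h2 := freiman_aux_card A a ha
        (A.filter (fun b => a + b ∉ A.erase a + A.erase a)) (Finset.filter_subset _ _)
        (fun b hb => (Finset.mem_filter.1 hb).2)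
      rw [hm] at h1
      nlinarith
    · have hle : m ≤ m' + 1 := by
        rw [← hm, ← hm', hins]
        exact finrank_vectorSpan_insert_le_set ℚ _ a
      have hge : m' ≤ m := by
        rw [← hm, ← hm']
        exact Submodule.finrank_mono (vectorSpan_mono ℚ (by simp))
      have hmeq : m = m' + 1 := by omega
      have hna : a ∉ affineSpan ℚ ((A.erase a : Finset V) : Set V) := by
        intro h
        apply hmm
        rw [← hm, ← hm', hins, ← direction_affineSpan, ← direction_affineSpan,
          affineSpan_insert_eq_affineSpan ℚ h]
      have h2 := freiman_aux_card A a ha A subset_rfl (by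
        intro b hb h
        obtain ⟨x, hx, y, hy, hxy⟩ := Finset.mem_add.1 h
        have hx' := subset_affineSpan ℚ ((A.erase a : Finset V) : Set V) (Finset.mem_coe.2 hx)
        have hy' := subset_affineSpan ℚ ((A.erase a : Finset V) : Set V) (Finset.mem_coe.2 hy)
        apply hna
        by_cases hba : b = a
        · subst hba
          have := AffineMap.lineMap_mem (1 / 2 : ℚ) hx' hy'
          convert this using 1
          have hy2 : y = b + b - x := by rw [← hxy]; abel
          rw [hy2, AffineMap.lineMap_apply_module]
          module
        · have hb' := subset_affineSpan ℚ ((A.erase a : Finset V) : Set V)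
            (Finset.mem_coe.2 (Finset.mem_erase.2 ⟨hba, hb⟩))
          have := AffineSubspace.smul_vsub_vadd_mem _ (1 : ℚ) hx' hb' hy'
          convert this using 1
          have : a = x + y - b := by rw [hxy]; abel
          rw [this]
          simp only [vsub_eq_sub, vadd_eq_add, one_smul]
          abel)
      subst hmeq
      rw [hA] at h2
      nlinarith

/-- Freiman's Lemma: if a finite subset `A` of a finite-dimensional `ℚ`-vector space has
affine rank `m` (its affine span has dimension `m`), then `|A + A| ≥ (m+1)|A| − m(m+1)/2`. -/
theorem freiman_lemma (V : Type*) [AddCommGroup V] [Module ℚ V] [FiniteDimensional ℚ V]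
    [DecidableEq V] (A : Finset V) (m : ℕ)
    (hm : Module.finrank ℚ (vectorSpan ℚ (A : Set V)) = m) :
    ((m : ℤ) + 1) * A.card - m * (m + 1) / 2 ≤ ((A + A).card : ℤ) := by
  have h := freiman_aux (W := Lex (Fin (Module.finrank ℚ V) → ℚ))
    (fun v => toLex ((Module.finBasis ℚ V).equivFun v))
    (fun x y => by rw [map_add]; rfl)
    (fun x y hxy => (Module.finBasis ℚ V).equivFun.injective (toLex.injective hxy))
    A.card A rfl m hm
  have h' : 2 * (((m : ℤ) + 1) * A.card) ≤ 2 * ((A + A).card : ℤ) + m * (m + 1) := by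
    rw [← mul_assoc]
    exact_mod_cast h
  have hev : (2 : ℤ) ∣ (m : ℤ) * (m + 1) := (Int.even_mul_succ_self m).two_dvd
  omega
end

section
/- There exists an absolute constant c > 0 such that for every finite set A ⊆ ℤ_{>0} with |AA| ≤ K|A| (K a positive integer), one has |A+A| ≥ c^{−K}|A|^2. -/
open scoped Pointwise

namespace ChangAux

/-- The vector of prime valuations. -/
def v (a : ℕ) : ℕ → ℚ := fun p => (a.factorization p : ℚ)

lemma v_mul {a b : ℕ} (ha : 0 < a) (hb : 0 < b) : v (a * b) = v a + v b := by
  funext p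
  simp [v, Nat.factorization_mul ha.ne' hb.ne']

/-- The rank of a set of positive integers. -/
noncomputable def rk (A : Finset ℕ) : ℕ :=
  Module.finrank ℚ (Submodule.span ℚ (v '' (A : Set ℕ)))

instance fd (A : Finset ℕ) : FiniteDimensional ℚ (Submodule.span ℚ (v '' (A : Set ℕ))) :=
  FiniteDimensional.span_of_finite ℚ (A.finite_toSet.image v)

lemma rk_le_card (A : Finset ℕ) : rk A ≤ A.card := by
  classical
  have h := finrank_span_finset_le_card (R := ℚ) (A.image v)
  rw [Finset.coe_image] at h
  exact h.trans Finset.card_image_le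

lemma rk_le_of_subset {A B : Finset ℕ}
    (h : ∀ b ∈ A, v b ∈ Submodule.span ℚ (v '' (B : Set ℕ))) : rk A ≤ rk B := by
  apply Submodule.finrank_mono
  rw [Submodule.span_le]
  rintro _ ⟨b, hb, rfl⟩
  exact h b hb

lemma rk_insert_le (A : Finset ℕ) (a : ℕ) : rk (insert a A) ≤ rk A + 1 := by
  unfold rk
  rw [Finset.coe_insert, Set.image_insert_eq, Submodule.span_insert]
  have h1 := Submodule.finrank_add_le_finrank_add_finrank
    (Submodule.span ℚ {v a}) (Submodule.span ℚ (v '' (A : Set ℕ)))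
  have h2 : Module.finrank ℚ (Submodule.span ℚ {v a}) ≤ 1 := by
    have := finrank_span_finset_le_card (R := ℚ) ({v a} : Finset (ℕ → ℚ))
    rw [Finset.coe_singleton, Finset.card_singleton] at this
    exact this
  omega

/-- Freiman's lemma. -/
lemma freiman (A : Finset ℕ) (hA : ∀ a ∈ A, 0 < a) :
    2 * (rk A * A.card) + rk A ≤ 2 * (A * A).card + rk A * rk A := by
  induction A using Finset.induction_on_max with
  | empty =>
    have : rk ∅ = 0 := Nat.le_zero.mp (rk_le_card ∅)
    simp [this]
  | insert a B hlt ih =>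
    have haB : a ∉ B := fun h => lt_irrefl _ (hlt a h)
    have ha : 0 < a := hA a (Finset.mem_insert_self _ _)
    have hB : ∀ b ∈ B, 0 < b := fun b hb => hA b (Finset.mem_insert_of_mem hb)
    specialize ih hB
    set N := (insert a B).filter (fun b => a * b ∉ B * B) with hN
    have hcard : (B * B).card + N.card ≤ (insert a B * insert a B).card := by
      have hinj : (N.image (fun b => a * b)).card = N.card :=
        Finset.card_image_of_injective _ (fun x y h => Nat.eq_of_mul_eq_mul_left ha h)
      rw [← hinj, ← Finset.card_union_of_disjoint]
      · apply Finset.card_le_card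
        apply Finset.union_subset
        · exact Finset.mul_subset_mul (Finset.subset_insert _ _) (Finset.subset_insert _ _)
        · intro x hx
          obtain ⟨b, hb, rfl⟩ := Finset.mem_image.mp hx
          exact Finset.mul_mem_mul (Finset.mem_insert_self _ _) (Finset.mem_filter.mp hb).1
      · rw [Finset.disjoint_right]
        intro x hx
        obtain ⟨b, hb, rfl⟩ := Finset.mem_image.mp hx
        exact (Finset.mem_filter.mp hb).2
    have haN : a ∈ N := by
      rw [hN, Finset.mem_filter]
      refine ⟨Finset.mem_insert_self _ _, fun h => ?_⟩
      obtain ⟨c, hc, d, hd, h⟩ := Finset.mem_mul.mp h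
      have := Nat.mul_lt_mul_of_lt_of_lt (hlt c hc) (hlt d hd)
      omega
    have hspan : ∀ b ∈ insert a B, v b ∈ Submodule.span ℚ (v '' (N : Set ℕ)) := by
      by_contra! hcon
      obtain ⟨b0, hb0, hb0'⟩ := hcon
      classical
      obtain ⟨b, hb, hmax⟩ := ((insert a B).filter
        (fun b => v b ∉ Submodule.span ℚ (v '' (N : Set ℕ)))).exists_max_image id
          ⟨b0, Finset.mem_filter.mpr ⟨hb0, hb0'⟩⟩
      obtain ⟨hbA, hbs⟩ := Finset.mem_filter.mp hb
      have hbN : b ∉ N := fun h => hbs (Submodule.subset_span ⟨b, h, rfl⟩)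
      have hbb : a * b ∈ B * B := by
        by_contra h
        exact hbN (Finset.mem_filter.mpr ⟨hbA, h⟩)
      obtain ⟨c, hc, d, hd, hcd⟩ := Finset.mem_mul.mp hbb
      have hbpos := hA b hbA
      have hcs : v c ∈ Submodule.span ℚ (v '' (N : Set ℕ)) := by
        by_contra h
        have h1 := hmax c (Finset.mem_filter.mpr ⟨Finset.mem_insert_of_mem hc, h⟩)
        have h2 := hlt d hd
        simp only [id] at h1
        have h3 := hB c hc
        nlinarith
      have hds : v d ∈ Submodule.span ℚ (v '' (N : Set ℕ)) := by
        by_contra h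
        have h1 := hmax d (Finset.mem_filter.mpr ⟨Finset.mem_insert_of_mem hd, h⟩)
        have h2 := hlt c hc
        simp only [id] at h1
        have h3 := hB d hd
        nlinarith
      have has : v a ∈ Submodule.span ℚ (v '' (N : Set ℕ)) :=
        Submodule.subset_span ⟨a, haN, rfl⟩
      apply hbs
      have e : v b = v c + v d - v a := by
        have := congrArg v hcd
        rw [v_mul (hB c hc) (hB d hd), v_mul ha hbpos] at this
        rw [this]; abel
      rw [e]
      exact Submodule.sub_mem _ (Submodule.add_mem _ hcs hds) has
    have hNr : rk (insert a B) ≤ N.card := (rk_le_of_subset hspan).trans (rk_le_card N)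
    have hle1 := rk_insert_le B a
    have hle2 : rk B ≤ rk (insert a B) := rk_le_of_subset fun b hb =>
      Submodule.subset_span ⟨b, by simp [hb], rfl⟩
    have hc1 : (insert a B).card = B.card + 1 := Finset.card_insert_of_notMem haB
    rcases Nat.lt_or_ge (rk B) (rk (insert a B)) with hlt' | hge
    · have heq : rk (insert a B) = rk B + 1 := by omega
      have hva : v a ∉ Submodule.span ℚ (v '' (B : Set ℕ)) := by
        intro h
        have : rk (insert a B) ≤ rk B := rk_le_of_subset fun b hb => by
          rcases Finset.mem_insert.mp hb with rfl | hb
          · exact h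
          · exact Submodule.subset_span ⟨b, hb, rfl⟩
        omega
      have hNA : N = insert a B := by
        apply Finset.filter_true_of_mem
        intro b hb hab
        rcases Finset.mem_insert.mp hb with rfl | hbB
        · exact (Finset.mem_filter.mp haN).2 hab
        obtain ⟨c, hc, d, hd, hcd⟩ := Finset.mem_mul.mp hab
        apply hva
        have e : v a = v c + v d - v b := by
          have := congrArg v hcd
          rw [v_mul (hB c hc) (hB d hd), v_mul ha (hB b hbB)] at this
          rw [this]; abel
        rw [e]
        exact Submodule.sub_mem _ (Submodule.add_mem _ (Submodule.subset_span ⟨c, hc, rfl⟩)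
          (Submodule.subset_span ⟨d, hd, rfl⟩)) (Submodule.subset_span ⟨b, hbB, rfl⟩)
      rw [hNA, hc1] at hcard
      rw [heq, hc1]
      nlinarith
    · have heq : rk (insert a B) = rk B := by omega
      rw [heq] at hNr ⊢
      rw [hc1]
      nlinarith

/-- A subspace of finite dimension is determined by few coordinates. -/
lemma coords (n : ℕ) : ∀ (V : Submodule ℚ (ℕ → ℚ)) [FiniteDimensional ℚ V],
    Module.finrank ℚ V ≤ n →
    ∃ S : Finset ℕ, S.card ≤ n ∧ ∀ x ∈ V, (∀ i ∈ S, x i = 0) → x = 0 := by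
  induction n with
  | zero =>
    intro V _ h
    refine ⟨∅, by simp, fun x hx _ => ?_⟩
    have : V = ⊥ := Submodule.finrank_eq_zero.mp (Nat.le_zero.mp h)
    simpa [this] using hx
  | succ n ih =>
    intro V _ h
    by_cases hV : ∃ x ∈ V, x ≠ 0
    · obtain ⟨x, hx, hx0⟩ := hV
      obtain ⟨i, hi⟩ := Function.ne_iff.mp hx0
      have hlt : V ⊓ LinearMap.ker (LinearMap.proj (R := ℚ) (φ := fun _ : ℕ => ℚ) i) < V := by
        refine lt_of_le_of_ne inf_le_left fun he => hi ?_
        rw [← he] at hx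
        simpa using hx.2
      have hfin := Submodule.finrank_lt_finrank_of_lt hlt
      have : FiniteDimensional ℚ
          (V ⊓ LinearMap.ker (LinearMap.proj (R := ℚ) (φ := fun _ : ℕ => ℚ) i) :
            Submodule ℚ (ℕ → ℚ)) := Submodule.finiteDimensional_of_le inf_le_left
      obtain ⟨S, hS, hS'⟩ := ih _ (by omega : Module.finrank ℚ
          (V ⊓ LinearMap.ker (LinearMap.proj (R := ℚ) (φ := fun _ : ℕ => ℚ) i) :
            Submodule ℚ (ℕ → ℚ)) ≤ n)
      refine ⟨insert i S, (Finset.card_insert_le _ _).trans (by omega), fun y hy hy0 => ?_⟩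
      refine hS' y ⟨hy, ?_⟩ fun j hj => hy0 j (Finset.mem_insert_of_mem hj)
      simpa using hy0 i (Finset.mem_insert_self _ _)
    · push Not at hV
      exact ⟨∅, by simp, fun x hx _ => hV x hx⟩

/-- Coincidences of a map between two finite sets. -/
def co {X Y : Type*} [DecidableEq Y] (φ : X → Y) (P Q : Finset X) : ℕ :=
  ((P ×ˢ Q).filter (fun z => φ z.1 = φ z.2)).card

lemma co_eq {X Y : Type*} [DecidableEq Y] (φ : X → Y) (P Q : Finset X) (T : Finset Y)
    (hT : ∀ x ∈ P, φ x ∈ T) :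
    co φ P Q = ∑ t ∈ T, (P.filter (fun x => φ x = t)).card * (Q.filter (fun x => φ x = t)).card := by
  unfold co
  rw [Finset.card_eq_sum_card_fiberwise (f := fun z => φ z.1) (t := T)]
  · refine Finset.sum_congr rfl fun t _ => ?_
    rw [← Finset.card_product]
    congr 1
    ext ⟨x, y⟩
    simp only [Finset.mem_filter, Finset.mem_product]
    constructor
    · rintro ⟨⟨⟨h1, h2⟩, h3⟩, h4⟩
      exact ⟨⟨h1, h4⟩, h2, h3 ▸ h4⟩
    · rintro ⟨⟨h1, h4⟩, h2, h3⟩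
      exact ⟨⟨⟨h1, h2⟩, h4.trans h3.symm⟩, h4⟩
  · intro z hz
    have hz := Finset.mem_filter.mp (Finset.mem_coe.mp hz)
    exact hT _ (Finset.mem_product.mp hz.1).1

lemma co_sq {X Y : Type*} [DecidableEq Y] (φ : X → Y) (P Q : Finset X) :
    co φ P Q ^ 2 ≤ co φ P P * co φ Q Q := by
  classical
  have hP : ∀ x ∈ P, φ x ∈ P.image φ ∪ Q.image φ := fun x hx =>
    Finset.mem_union_left _ (Finset.mem_image_of_mem _ hx)
  have hQ : ∀ x ∈ Q, φ x ∈ P.image φ ∪ Q.image φ := fun x hx =>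
    Finset.mem_union_right _ (Finset.mem_image_of_mem _ hx)
  rw [co_eq φ P Q _ hP, co_eq φ P P _ hP, co_eq φ Q Q _ hQ]
  simp only [← sq]
  exact Finset.sum_mul_sq_le_sq_mul_sq _ _ _

/-- sum of coordinates -/
def sm (x : ℕ × ℕ) : ℤ := (x.1 : ℤ) + x.2

/-- difference of coordinates -/
def df (x : ℕ × ℕ) : ℤ := (x.1 : ℤ) - x.2

/-- additive energy -/
def En (A : Finset ℕ) : ℕ := co sm (A ×ˢ A) (A ×ˢ A)

lemma co_df (A : Finset ℕ) : co df (A ×ˢ A) (A ×ˢ A) = En A := by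
  unfold En co
  apply Finset.card_nbij' (fun z => ((z.1.1, z.2.2), (z.2.1, z.1.2)))
    (fun z => ((z.1.1, z.2.2), (z.2.1, z.1.2)))
  · intro z h
    have h := Finset.mem_filter.mp h
    refine Finset.mem_filter.mpr ?_
    simp only [Finset.mem_product, df, sm] at h ⊢
    exact ⟨by tauto, by omega⟩
  · intro z h
    have h := Finset.mem_filter.mp h
    refine Finset.mem_filter.mpr ?_
    simp only [Finset.mem_product, df, sm] at h ⊢
    exact ⟨by tauto, by omega⟩
  · intro z _; rfl
  · intro z _; rfl

lemma pair_eq (p a b c d : ℕ) (ha : 0 < a) (hb : 0 < b) (hc : 0 < c) (hd : 0 < d)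
    (h : a + b = c + d) :
    a.factorization p = b.factorization p ∨ c.factorization p = d.factorization p ∨
    a.factorization p = c.factorization p ∨ a.factorization p = d.factorization p ∨
    b.factorization p = c.factorization p ∨ b.factorization p = d.factorization p := by
  by_cases hp : p.Prime
  · by_contra! hne
    obtain ⟨h1, h2, h3, h4, h5, h6⟩ := hne
    have key : ∀ x y z w : ℕ, 0 < x → 0 < y → 0 < z → 0 < w → x + y = z + w →
        ¬ (x.factorization p < y.factorization p ∧ x.factorization p < z.factorization p ∧
        x.factorization p < w.factorization p) := by
      rintro x y z w hx hy hz hw he ⟨hxy, hxz, hxw⟩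
      have e1 := (hp.pow_dvd_iff_le_factorization hy.ne').mpr hxy
      have e2 := (hp.pow_dvd_iff_le_factorization hz.ne').mpr hxz
      have e3 := (hp.pow_dvd_iff_le_factorization hw.ne').mpr hxw
      have e4 := (Nat.dvd_add_left e1).mp (he ▸ Nat.dvd_add e2 e3)
      have := (hp.pow_dvd_iff_le_factorization hx.ne').mp e4
      omega
    have k1 := key a b c d ha hb hc hd h
    have k2 := key b a c d hb ha hc hd (by omega)
    have k3 := key c d a b hc hd ha hb (by omega)
    have k4 := key d c a b hd hc ha hb (by omega)
    omega
  · left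
    simp [Nat.factorization_eq_zero_of_not_prime _ hp]

/-- fiber of the p-adic valuation -/
def fib (A : Finset ℕ) (p j : ℕ) : Finset ℕ := A.filter (fun a => a.factorization p = j)

/-- coincidences whose first pair has equal valuation -/
def U (φ : ℕ × ℕ → ℤ) (A : Finset ℕ) (p : ℕ) : Finset ((ℕ × ℕ) × (ℕ × ℕ)) :=
  ((A ×ˢ A) ×ˢ (A ×ˢ A)).filter
    (fun z => φ z.1 = φ z.2 ∧ z.1.1.factorization p = z.1.2.factorization p)

/-- values of the valuation -/
def vals (A : Finset ℕ) (p : ℕ) : Finset ℕ := A.image (fun a => a.factorization p)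

lemma U_card (φ : ℕ × ℕ → ℤ) (A : Finset ℕ) (p : ℕ) :
    (U φ A p).card = ∑ j ∈ vals A p, co φ (fib A p j ×ˢ fib A p j) (A ×ˢ A) := by
  rw [Finset.card_eq_sum_card_fiberwise (f := fun z => z.1.1.factorization p) (t := vals A p)]
  · refine Finset.sum_congr rfl fun j _ => ?_
    unfold co
    congr 1
    ext ⟨⟨a, b⟩, c, d⟩
    simp only [U, fib, Finset.mem_filter, Finset.mem_product]
    constructor
    · rintro ⟨⟨⟨⟨h1, h2⟩, h3⟩, h4, h5⟩, h6⟩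
      exact ⟨⟨⟨⟨h1, h6⟩, h2, h5 ▸ h6⟩, h3⟩, h4⟩
    · rintro ⟨⟨⟨⟨h1, h6⟩, h2, h5⟩, h3⟩, h4⟩
      exact ⟨⟨⟨⟨h1, h2⟩, h3⟩, h4, h6.trans h5.symm⟩, h6⟩
  · intro z hz
    have hz := Finset.mem_filter.mp (Finset.mem_coe.mp hz)
    exact Finset.mem_image_of_mem _ (Finset.mem_product.mp (Finset.mem_product.mp hz.1).1).1

lemma U_le (φ : ℕ × ℕ → ℤ) (hφ : ∀ A : Finset ℕ, co φ (A ×ˢ A) (A ×ˢ A) = En A)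
    (A : Finset ℕ) (p : ℕ) :
    ((U φ A p).card : ℝ) ≤ (∑ j ∈ vals A p, √(En (fib A p j) : ℝ)) * √(En A : ℝ) := by
  rw [U_card, Finset.sum_mul]
  push_cast
  refine Finset.sum_le_sum fun j _ => ?_
  rw [← Real.sqrt_mul (Nat.cast_nonneg _)]
  apply Real.le_sqrt_of_sq_le
  have := co_sq φ (fib A p j ×ˢ fib A p j) (A ×ˢ A)
  rw [hφ, hφ] at this
  exact_mod_cast this

lemma En_le_U (A : Finset ℕ) (hA : ∀ a ∈ A, 0 < a) (p : ℕ) :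
    En A ≤ 2 * (U sm A p).card + 4 * (U df A p).card := by
  classical
  have hsub : ((A ×ˢ A) ×ˢ (A ×ˢ A)).filter (fun z => sm z.1 = sm z.2) ⊆
      (U sm A p) ∪ (U sm A p).image (fun z => (z.2, z.1)) ∪
      (U df A p).image (fun z => ((z.1.1, z.2.2), (z.1.2, z.2.1))) ∪
      (U df A p).image (fun z => ((z.1.1, z.2.2), (z.2.1, z.1.2))) ∪
      (U df A p).image (fun z => ((z.2.2, z.1.1), (z.1.2, z.2.1))) ∪
      (U df A p).image (fun z => ((z.2.2, z.1.1), (z.2.1, z.1.2))) := by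
    intro z h
    have h := Finset.mem_filter.mp h
    obtain ⟨⟨a, b⟩, c, d⟩ := z
    simp only [Finset.mem_product, sm] at h
    obtain ⟨⟨⟨ha, hb⟩, hc, hd⟩, h⟩ := h
    have hp := pair_eq p a b c d (hA a ha) (hA b hb) (hA c hc) (hA d hd) (by omega)
    simp only [Finset.mem_union, Finset.mem_image]
    rcases hp with hp | hp | hp | hp | hp | hp
    · refine Or.inl (Or.inl (Or.inl (Or.inl (Or.inl ?_))))
      refine Finset.mem_filter.mpr ?_
      simp only [Finset.mem_product, sm]
      exact ⟨⟨⟨ha, hb⟩, hc, hd⟩, h, hp⟩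
    · refine Or.inl (Or.inl (Or.inl (Or.inl (Or.inr ⟨((c, d), (a, b)), ?_, rfl⟩))))
      refine Finset.mem_filter.mpr ?_
      simp only [Finset.mem_product, sm]
      exact ⟨⟨⟨hc, hd⟩, ha, hb⟩, h.symm, hp⟩
    · refine Or.inl (Or.inl (Or.inl (Or.inr ⟨((a, c), (d, b)), ?_, rfl⟩)))
      refine Finset.mem_filter.mpr ?_
      simp only [Finset.mem_product, df]
      exact ⟨⟨⟨ha, hc⟩, hd, hb⟩, by omega, hp⟩
    · refine Or.inl (Or.inl (Or.inr ⟨((a, d), (c, b)), ?_, rfl⟩))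
      refine Finset.mem_filter.mpr ?_
      simp only [Finset.mem_product, df]
      exact ⟨⟨⟨ha, hd⟩, hc, hb⟩, by omega, hp⟩
    · refine Or.inl (Or.inr ⟨((b, c), (d, a)), ?_, rfl⟩)
      refine Finset.mem_filter.mpr ?_
      simp only [Finset.mem_product, df]
      exact ⟨⟨⟨hb, hc⟩, hd, ha⟩, by omega, hp⟩
    · refine Or.inr ⟨((b, d), (c, a)), ?_, rfl⟩
      refine Finset.mem_filter.mpr ?_
      simp only [Finset.mem_product, df]
      exact ⟨⟨⟨hb, hd⟩, hc, ha⟩, by omega, hp⟩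
  have h0 := Finset.card_le_card hsub
  have im : ∀ (W : Finset ((ℕ × ℕ) × (ℕ × ℕ))) (f : (ℕ × ℕ) × (ℕ × ℕ) → (ℕ × ℕ) × (ℕ × ℕ))
      (V : Finset ((ℕ × ℕ) × (ℕ × ℕ))), (V ∪ W.image f).card ≤ V.card + W.card := fun W f V =>
    (Finset.card_union_le _ _).trans (Nat.add_le_add_left Finset.card_image_le _)
  have e5 := h0.trans (im _ _ _)
  have e4 := e5.trans (Nat.add_le_add_right (im _ _ _) _)
  have e3 := e4.trans (Nat.add_le_add_right (Nat.add_le_add_right (im _ _ _) _) _)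
  have e2 := e3.trans (Nat.add_le_add_right (Nat.add_le_add_right
    (Nat.add_le_add_right (im _ _ _) _) _) _)
  have e1 := e2.trans (Nat.add_le_add_right (Nat.add_le_add_right
    (Nat.add_le_add_right (Nat.add_le_add_right (im _ _ _) _) _) _) _)
  unfold En co
  omega

/-- Chang's lemma for one prime. -/
lemma chang_step (A : Finset ℕ) (hA : ∀ a ∈ A, 0 < a) (p : ℕ) :
    √(En A : ℝ) ≤ 6 * ∑ j ∈ vals A p, √(En (fib A p j) : ℝ) := by
  have h1 := U_le sm (fun _ => rfl) A p
  have h2 := U_le df co_df A p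
  have h3 : (En A : ℝ) ≤ 2 * ((U sm A p).card : ℝ) + 4 * ((U df A p).card : ℝ) := by
    have h := (Nat.cast_le (α := ℝ)).mpr (En_le_U A hA p)
    rw [Nat.cast_add, Nat.cast_mul, Nat.cast_mul] at h
    exact h
  have hs : 0 ≤ ∑ j ∈ vals A p, √(En (fib A p j) : ℝ) :=
    Finset.sum_nonneg fun _ _ => Real.sqrt_nonneg _
  rcases (Real.sqrt_nonneg (En A : ℝ)).eq_or_lt with h0 | h0
  · rw [← h0]; exact mul_nonneg (by norm_num) hs
  · have h4 := Real.mul_self_sqrt (Nat.cast_nonneg (α := ℝ) (En A))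
    refine le_of_mul_le_mul_right ?_ h0
    rw [h4]
    linarith

lemma energy_bound (S : Finset ℕ) : ∀ A : Finset ℕ, (∀ a ∈ A, 0 < a) →
    (∀ a ∈ A, ∀ b ∈ A, (∀ p ∈ S, a.factorization p = b.factorization p) → a = b) →
    √(En A : ℝ) ≤ 6 ^ S.card * (A.card : ℝ) := by
  induction S using Finset.induction_on with
  | empty =>
    intro A _ h
    have hc : A.card ≤ 1 := Finset.card_le_one.mpr fun a ha b hb => h a ha b hb (by simp)
    have hE : En A ≤ A.card ^ 2 := by
      have : En A ≤ ((A ×ˢ A) ×ˢ (A ×ˢ A)).card := Finset.card_filter_le _ _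
      simp only [Finset.card_product] at this
      refine this.trans ?_
      interval_cases A.card <;> norm_num
    simp only [Finset.card_empty, pow_zero, one_mul]
    apply Real.sqrt_le_iff.mpr
    exact ⟨by positivity, by exact_mod_cast hE⟩
  | insert p S hp ih =>
    intro A hA h
    refine (chang_step A hA p).trans ?_
    have hsum : ∑ j ∈ vals A p, √(En (fib A p j) : ℝ) ≤
        ∑ j ∈ vals A p, 6 ^ S.card * ((fib A p j).card : ℝ) := by
      refine Finset.sum_le_sum fun j _ => ih _ ?_ ?_
      · exact fun a ha => hA a (Finset.mem_filter.mp ha).1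
      · intro a ha b hb hab
        have ha := Finset.mem_filter.mp ha
        have hb := Finset.mem_filter.mp hb
        refine h a ha.1 b hb.1 fun q hq => ?_
        rcases Finset.mem_insert.mp hq with rfl | hq
        · exact ha.2.trans hb.2.symm
        · exact hab q hq
    have hcard : (A.card : ℝ) = ∑ j ∈ vals A p, ((fib A p j).card : ℝ) := by
      have := Finset.card_eq_sum_card_fiberwise (s := A) (f := fun a => a.factorization p)
        (t := vals A p) (fun a ha => Finset.mem_image_of_mem _ ha)
      exact_mod_cast this
    rw [← Finset.mul_sum, ← hcard] at hsum
    rw [Finset.card_insert_of_notMem hp, pow_succ]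
    linarith

lemma cauchy (A : Finset ℕ) : A.card ^ 4 ≤ (A + A).card * En A := by
  have hT : ∀ x ∈ A ×ˢ A, sm x ∈ (A + A).image (fun n : ℕ => (n : ℤ)) := by
    intro x hx
    have hx := Finset.mem_product.mp hx
    exact Finset.mem_image.mpr ⟨x.1 + x.2, Finset.add_mem_add hx.1 hx.2, by simp [sm]⟩
  have h1 := Finset.card_eq_sum_card_fiberwise (s := A ×ˢ A) (f := sm)
    (t := (A + A).image (fun n : ℕ => (n : ℤ))) (fun x hx => hT x hx)
  have h2 : En A = _ := co_eq sm (A ×ˢ A) (A ×ˢ A) _ hT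
  have h3 := sq_sum_le_card_mul_sum_sq (s := (A + A).image (fun n : ℕ => (n : ℤ)))
    (f := fun t => ((A ×ˢ A).filter (fun x => sm x = t)).card)
  rw [← h1, Finset.card_image_of_injective _ Nat.cast_injective] at h3
  simp only [sq] at h3
  rw [← h2, Finset.card_product] at h3
  calc A.card ^ 4 = A.card * A.card * (A.card * A.card) := by ring
    _ ≤ _ := h3

end ChangAux

open ChangAux in
/-- Chang's sumset bound: there is an absolute constant `c > 0` such that any finite set of
positive integers with `|AA| ≤ K|A|` satisfies `|A + A| ≥ c⁻ᴷ |A|²`. -/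
theorem chang_sumset : ∃ c : ℝ, 0 < c ∧
    ∀ (K : ℕ), 0 < K → ∀ A : Finset ℕ, (∀ a ∈ A, 0 < a) →
      (A * A).card ≤ K * A.card →
      (c ^ K)⁻¹ * (A.card : ℝ) ^ 2 ≤ ((A + A).card : ℝ) := by
  refine ⟨1296, by norm_num, fun K _ A hA hK => ?_⟩
  rcases A.eq_empty_or_nonempty with rfl | hne
  · simp
  have hn : 0 < A.card := hne.card_pos
  have hr : rk A ≤ 2 * K := by
    have h1 := freiman A hA
    have h2 := rk_le_card A
    have h3 : rk A * rk A ≤ rk A * A.card := Nat.mul_le_mul_left _ h2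
    have h4 : rk A * A.card ≤ 2 * K * A.card := by nlinarith
    exact Nat.le_of_mul_le_mul_right h4 hn
  obtain ⟨S, hS, hS'⟩ := coords (2 * K) (Submodule.span ℚ (v '' (A : Set ℕ))) hr
  have hE := energy_bound S A hA (by
    intro a ha b hb hab
    have h0 := hS' (v a - v b) (Submodule.sub_mem _ (Submodule.subset_span ⟨a, ha, rfl⟩)
      (Submodule.subset_span ⟨b, hb, rfl⟩)) (fun i hi => by simp [v, hab i hi])
    refine Nat.eq_of_factorization_eq (hA a ha).ne' (hA b hb).ne' fun p => ?_
    have := congrFun h0 p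
    simp only [v, Pi.sub_apply, Pi.zero_apply, sub_eq_zero] at this
    exact_mod_cast this)
  have hE2 : (En A : ℝ) ≤ 1296 ^ K * (A.card : ℝ) ^ 2 := by
    have h6 : (6 : ℝ) ^ S.card ≤ 6 ^ (2 * K) := pow_le_pow_right₀ (by norm_num) hS
    have h7 : √(En A : ℝ) ≤ 6 ^ (2 * K) * (A.card : ℝ) :=
      hE.trans (mul_le_mul_of_nonneg_right h6 (Nat.cast_nonneg _))
    have h8 := (Real.sqrt_le_iff.mp h7).2
    have h9 : ((6 : ℝ) ^ (2 * K) * (A.card : ℝ)) ^ 2 = 1296 ^ K * (A.card : ℝ) ^ 2 := by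
      rw [mul_pow, ← pow_mul, show 2 * K * 2 = 4 * K by ring, pow_mul]
      norm_num
    rwa [h9] at h8
  have hC : (A.card : ℝ) ^ 4 ≤ ((A + A).card : ℝ) * (En A : ℝ) := by exact_mod_cast cauchy A
  have hn' : (0 : ℝ) < (A.card : ℝ) ^ 2 := by positivity
  have h10 : (A.card : ℝ) ^ 2 * (A.card : ℝ) ^ 2 ≤
      (1296 ^ K * ((A + A).card : ℝ)) * (A.card : ℝ) ^ 2 := by
    have := mul_le_mul_of_nonneg_left hE2 (Nat.cast_nonneg (α := ℝ) (A + A).card)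
    nlinarith
  have h11 := le_of_mul_le_mul_right h10 hn'
  rw [inv_mul_le_iff₀ (by positivity)]
  exact h11
end
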